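/- Let V have the CDF P_V(v) = 1 + (N−1) Σ_{n=0}^{N−2} Σ_{m=1}^{2^B} C(N−2,n) C(2^B,m) (−1)^{n+m} m (v^n − v^{m(N−1)})/(mN − (m+n)) on [0,1], and let R be an independent chi-square random variable with density r^{N−1} e^{−r}/(N−1)! on (0,∞), with integers N ≥ 3, B ≥ 1. Then D = RV has CDF P_D(d) = 1 + (e^{−d}/(N−2)!)·[Σ_{n=0}^{N−2} Σ_{m=1}^{2^B} C(N−2,n)C(2^B,m) ((−1)^{n+m} m/(mN−(m+n))) Σ_{l=0}^{N−1−n} l! C(N−1−n,l) d^{N−1−l}] − (e^{−d}/(N−2)!)·[Σ_{n=0}^{N−2} C(N−2,n)·2^B·((−1)^{n+1}/(N−1−n)) d^{N−1}] − (e^{−d}/(N−2)!)·[Σ_{n=0}^{N−2} Σ_{m=2}^{2^B} C(N−2,n)C(2^B,m) ((−1)^{n+m} m/(mN−(m+n))) Σ_{l=1}^{(m−1)(N−1)−1} (−1)^{l−1} d^{N−1+l}/(l! C((m−1)(N−1)−1, l))] − (E₁(d)/(N−2)!)·[Σ_{n=0}^{N−2} Σ_{m=2}^{2^B} C(N−2,n)C(2^B,m)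 ((−1)^{n+m} m/(mN−(m+n))) ((−1)^{(m−1)(N−1)−1} d^{m(N−1)}/(( (m−1)(N−1)−1 )!))], for d > 0, where E₁(d) = ∫_d^∞ e^{−t}/t dt. -/

import Mathlib

open MeasureTheory ProbabilityTheory Finset

/-- Exponential integral `E₁(d) = ∫_d^∞ e^{−t}/t dt`. -/
noncomputable def expIntE1 (d : ℝ) : ℝ := ∫ t in Set.Ioi d, Real.exp (-t) / t

lemma aux_intG (d : ℝ) (hd : 0 < d) (k : ℕ) :
    IntegrableOn (fun r : ℝ => r ^ k * Real.exp (-r)) (Set.Ioi d) := by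
  have h := Real.GammaIntegral_convergent (s := (k : ℝ) + 1) (by positivity)
  refine (h.mono_set (Set.Ioi_subset_Ioi hd.le)).congr_fun (fun r hr => ?_) measurableSet_Ioi
  simp [mul_comm]

lemma aux_intJ (d : ℝ) (hd : 0 < d) (k : ℕ) :
    IntegrableOn (fun r : ℝ => Real.exp (-r) / r ^ k) (Set.Ioi d) := by
  have h := (aux_intG d hd 0).const_mul (1 / d ^ k)
  refine Integrable.mono' h (Measurable.aestronglyMeasurable (by fun_prop)) ?_
  refine (ae_restrict_iff' measurableSet_Ioi).2 (Filter.Eventually.of_forall fun r hr => ?_)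
  have hr' : d < r := hr
  have hr0 : 0 < r := hd.trans hr'
  rw [Real.norm_of_nonneg (by positivity)]
  rw [pow_zero, one_mul, div_mul_eq_mul_div, one_mul]
  gcongr

lemma aux_tendG (k : ℕ) :
    Filter.Tendsto (fun r : ℝ => r ^ k * Real.exp (-r)) Filter.atTop (nhds 0) :=
  Real.tendsto_pow_mul_exp_neg_atTop_nhds_zero k

lemma aux_tendJ (k : ℕ) :
    Filter.Tendsto (fun r : ℝ => Real.exp (-r) / r ^ k) Filter.atTop (nhds 0) := by
  have h := aux_tendG 0
  refine squeeze_zero' (g := fun r : ℝ => r ^ 0 * Real.exp (-r)) ?_ ?_ h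
  · filter_upwards [Filter.eventually_ge_atTop 1] with r hr
    positivity
  · filter_upwards [Filter.eventually_ge_atTop 1] with r hr
    rw [pow_zero, one_mul]
    exact div_le_self (Real.exp_pos _).le (one_le_pow₀ hr)

lemma aux_recG (d : ℝ) (hd : 0 < d) (k : ℕ) :
    ∫ r in Set.Ioi d, r ^ (k + 1) * Real.exp (-r)
      = d ^ (k + 1) * Real.exp (-d) + (k + 1) * ∫ r in Set.Ioi d, r ^ k * Real.exp (-r) := by
  have h1 : IntegrableOn (fun r : ℝ => (k + 1) * (r ^ k * Real.exp (-r))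
      - r ^ (k + 1) * Real.exp (-r)) (Set.Ioi d) :=
    ((aux_intG d hd k).const_mul _).sub (aux_intG d hd (k + 1))
  have h := integral_Ioi_of_hasDerivAt_of_tendsto' (a := d)
    (f := fun r : ℝ => r ^ (k + 1) * Real.exp (-r)) (fun r _ => by
      have := (hasDerivAt_pow (k + 1) r).mul ((hasDerivAt_neg r).exp)
      refine this.congr_deriv ?_
      show _ = (k + 1) * (r ^ k * Real.exp (-r)) - r ^ (k + 1) * Real.exp (-r)
      push_cast
      simp
      ring) h1 (aux_tendG (k + 1))
  rw [integral_sub ((aux_intG d hd k).const_mul _) (aux_intG d hd (k + 1)),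
    integral_const_mul] at h
  linarith

lemma aux_recJ (d : ℝ) (hd : 0 < d) (k : ℕ) :
    (k : ℝ) * ∫ r in Set.Ioi d, Real.exp (-r) / r ^ (k + 1)
      = Real.exp (-d) / d ^ k - ∫ r in Set.Ioi d, Real.exp (-r) / r ^ k := by
  have h1 : IntegrableOn (fun r : ℝ => - (Real.exp (-r) / r ^ k)
      - k * (Real.exp (-r) / r ^ (k + 1))) (Set.Ioi d) :=
    ((aux_intJ d hd k).neg).sub ((aux_intJ d hd (k + 1)).const_mul _)
  have h := integral_Ioi_of_hasDerivAt_of_tendsto' (a := d)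
    (f := fun r : ℝ => Real.exp (-r) / r ^ k) (fun r hr => by
      have hr0 : r ≠ 0 := (hd.trans_le hr).ne'
      have := ((hasDerivAt_neg r).exp).div (hasDerivAt_pow k r) (pow_ne_zero k hr0)
      refine this.congr_deriv ?_
      show _ = - (Real.exp (-r) / r ^ k) - k * (Real.exp (-r) / r ^ (k + 1))
      rcases k with _ | k
      · simp
      · simp only [Nat.add_sub_cancel]
        field_simp
        ring) h1 (aux_tendJ k)
  have h2 := integral_sub (aux_intJ d hd k).neg ((aux_intJ d hd (k + 1)).const_mul (k : ℝ))
  have h3 := integral_neg (μ := volume.restrict (Set.Ioi d)) (fun r : ℝ => Real.exp (-r) / r ^ k)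
  rw [integral_const_mul] at h2
  simp only [Pi.neg_apply] at h2
  rw [h2, h3] at h
  linarith

lemma aux_expint (d : ℝ) : ∫ r in Set.Ioi d, r ^ 0 * Real.exp (-r) = Real.exp (-d) := by
  simp only [pow_zero, one_mul]
  exact integral_exp_neg_Ioi d

lemma aux_G (d : ℝ) (hd : 0 < d) (k : ℕ) :
    ∫ r in Set.Ioi d, r ^ k * Real.exp (-r)
      = Real.exp (-d) * ∑ l ∈ Finset.range (k + 1),
        (Nat.factorial l : ℝ) * (k.choose l : ℝ) * d ^ (k - l) := by
  induction k with
  | zero => rw [aux_expint]; simp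
  | succ k ih =>
    rw [aux_recG d hd k, ih, Finset.sum_range_succ' _ (k + 1)]
    simp only [Nat.add_sub_add_right]
    have : ∀ l : ℕ, ((l + 1).factorial : ℝ) * ((k + 1).choose (l + 1) : ℝ) * d ^ (k - l)
        = (k + 1) * ((l.factorial : ℝ) * (k.choose l : ℝ) * d ^ (k - l)) := fun l => by
      have := Nat.add_one_mul_choose_eq k l
      have h2 : ((k : ℝ) + 1) * (k.choose l : ℝ) = ((k + 1).choose (l + 1) : ℝ) * (l + 1) := by
        exact_mod_cast this
      rw [Nat.factorial_succ]
      push_cast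
      linear_combination -(l.factorial : ℝ) * d ^ (k - l) * h2
    simp only [this, ← Finset.mul_sum]
    simp
    ring

lemma aux_J (d : ℝ) (hd : 0 < d) (k : ℕ) :
    d ^ (k + 1) * ∫ r in Set.Ioi d, Real.exp (-r) / r ^ (k + 1)
      = Real.exp (-d) * ∑ l ∈ Finset.Icc 1 k,
          (-1 : ℝ) ^ (l - 1) * d ^ l / ((Nat.factorial l : ℝ) * (k.choose l : ℝ))
        + expIntE1 d * ((-1) ^ k * d ^ (k + 1) / (Nat.factorial k : ℝ)) := by
  have hS : ∀ k : ℕ, ∑ l ∈ Finset.Icc 1 k,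
          (-1 : ℝ) ^ (l - 1) * d ^ l / ((Nat.factorial l : ℝ) * (k.choose l : ℝ))
      = ∑ l ∈ Finset.range k, (-1 : ℝ) ^ l * d ^ (l + 1) /
          ((Nat.factorial (l + 1) : ℝ) * (k.choose (l + 1) : ℝ)) := fun k => by
    rw [Finset.range_eq_Ico]
    exact (Finset.sum_Ico_add' (fun l : ℕ => (-1 : ℝ) ^ (l - 1) * d ^ l /
          ((Nat.factorial l : ℝ) * (k.choose l : ℝ))) 0 k 1).symm
  rw [hS]
  induction k with
  | zero => simp [expIntE1, mul_comm]
  | succ k ih =>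
    have hr := aux_recJ d hd (k + 1)
    rw [Finset.sum_range_succ' _ k]
    have : ∀ l : ℕ, (-1 : ℝ) ^ (l + 1) * d ^ (l + 1 + 1) /
          ((Nat.factorial (l + 1 + 1) : ℝ) * ((k + 1).choose (l + 1 + 1) : ℝ))
        = (- d / (k + 1)) * ((-1 : ℝ) ^ l * d ^ (l + 1) /
          ((Nat.factorial (l + 1) : ℝ) * (k.choose (l + 1) : ℝ))) := fun l => by
      have := Nat.add_one_mul_choose_eq k (l + 1)
      have h2 : ((k : ℝ) + 1) * (k.choose (l + 1) : ℝ)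
          = ((k + 1).choose (l + 1 + 1) : ℝ) * (l + 1 + 1) := by
        exact_mod_cast this
      rw [Nat.factorial_succ (l + 1)]
      have h3 : (((l + 1 + 1) * (l + 1).factorial : ℕ) : ℝ) * ((k + 1).choose (l + 1 + 1) : ℝ)
          = (k + 1) * (((l + 1).factorial : ℝ) * (k.choose (l + 1) : ℝ)) := by
        push_cast
        linear_combination -((l + 1).factorial : ℝ) * h2
      rw [h3, div_mul_div_comm]
      congr 1
      ring
    simp only [this, ← Finset.mul_sum]
    set S := ∑ l ∈ Finset.range k, (-1 : ℝ) ^ l * d ^ (l + 1) /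
          ((Nat.factorial (l + 1) : ℝ) * (k.choose (l + 1) : ℝ))
    set J := ∫ r in Set.Ioi d, Real.exp (-r) / r ^ (k + 1)
    set J' := ∫ r in Set.Ioi d, Real.exp (-r) / r ^ (k + 1 + 1)
    have hk : ((k : ℝ) + 1) ≠ 0 := by positivity
    have hf : ((k.factorial : ℕ) : ℝ) ≠ 0 := by positivity
    have e : J' = (Real.exp (-d) / d ^ (k + 1) - J) / (k + 1) := by
      rw [eq_div_iff hk]
      push_cast at hr
      linarith
    have e2 : d ^ (k + 1 + 1) * J' = (d * Real.exp (-d) - d * (d ^ (k + 1) * J)) / (k + 1) := by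
      rw [e]
      field_simp
      ring
    have hf2 : (((k + 1).factorial : ℕ) : ℝ) = (k + 1) * k.factorial := by
      rw [Nat.factorial_succ]; push_cast; ring
    rw [e2, ih, hf2]
    simp
    field_simp
    ring

lemma aux_sumpow (M : ℕ) (hM : 1 ≤ M) (w : ℝ) :
    (M : ℝ) * (1 - w) ^ (M - 1)
      = - ∑ m ∈ Finset.Icc 1 M, (M.choose m : ℝ) * (-1 : ℝ) ^ m * m * w ^ (m - 1) := by
  obtain ⟨K, rfl⟩ : ∃ K, M = K + 1 := ⟨M - 1, by omega⟩
  have hS : ∑ m ∈ Finset.Icc 1 (K + 1),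
        ((K + 1).choose m : ℝ) * (-1 : ℝ) ^ m * m * w ^ (m - 1)
      = ∑ m ∈ Finset.range (K + 1), ((K + 1).choose (m + 1) : ℝ) * (-1 : ℝ) ^ (m + 1)
          * ((m + 1 : ℕ) : ℝ) * w ^ m := by
    rw [Finset.range_eq_Ico]
    exact (Finset.sum_Ico_add' (fun m : ℕ =>
      ((K + 1).choose m : ℝ) * (-1 : ℝ) ^ m * m * w ^ (m - 1)) 0 (K + 1) 1).symm
  rw [hS, sub_eq_add_neg, add_comm (1 : ℝ), Nat.add_sub_cancel, add_pow, Finset.mul_sum,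
    ← Finset.sum_neg_distrib]
  refine Finset.sum_congr rfl fun m _ => ?_
  have := Nat.add_one_mul_choose_eq K m
  have h2 : ((K : ℝ) + 1) * (K.choose m : ℝ) = ((K + 1).choose (m + 1) : ℝ) * (m + 1) := by
    exact_mod_cast this
  rw [neg_pow]
  push_cast
  rw [one_pow]
  linear_combination (-1 : ℝ) ^ m * w ^ m * h2

lemma aux_Fnonneg (p M : ℕ) (hM : 1 ≤ M) (v : ℝ) (hv0 : 0 ≤ v) (hv1 : v ≤ 1) :
    0 ≤ 1 + (((p + 2 : ℕ) : ℝ) - 1) *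
            ∑ n ∈ Finset.range (p + 1), ∑ m ∈ Finset.Icc 1 M,
              (p.choose n : ℝ) * (M.choose m : ℝ) * (-1 : ℝ) ^ (n + m)
                * (m : ℝ) * (v ^ n - v ^ (m * (p + 1)))
                / ((m : ℝ) * ((p + 2 : ℕ) : ℝ) - ((m : ℝ) + (n : ℝ))) := by
  -- integral representation
  have hexp : ∀ z : ℝ, (z - v) ^ p * ((M : ℝ) * (1 - z ^ (p + 1)) ^ (M - 1))
      = - ∑ n ∈ Finset.range (p + 1), ∑ m ∈ Finset.Icc 1 M,
          ((p.choose n : ℝ) * (M.choose m : ℝ) * (-1 : ℝ) ^ (n + m) * (m : ℝ) * v ^ n)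
            * z ^ (m * (p + 1) - 1 - n) := by
    intro z
    rw [aux_sumpow M hM, sub_eq_add_neg, add_comm, add_pow, mul_neg, Finset.sum_mul_sum]
    congr 1
    refine Finset.sum_congr rfl fun n hn => Finset.sum_congr rfl fun m hm => ?_
    have hn' := Finset.mem_range.1 hn
    obtain ⟨q, rfl⟩ : ∃ q, m = q + 1 := ⟨m - 1, by have := (Finset.mem_Icc.1 hm).1; omega⟩
    have h1 : (q + 1) * (p + 1) - 1 - n = (p - n) + (p + 1) * q := by
      have : (q + 1) * (p + 1) = (p + 1) * q + (p + 1) := by ring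
      omega
    rw [h1, neg_pow, pow_add z (p - n), pow_mul z, Nat.add_sub_cancel]
    ring
  have hint : ∫ z in v..1, (z - v) ^ p * ((M : ℝ) * (1 - z ^ (p + 1)) ^ (M - 1))
      = - ∑ n ∈ Finset.range (p + 1), ∑ m ∈ Finset.Icc 1 M,
              (p.choose n : ℝ) * (M.choose m : ℝ) * (-1 : ℝ) ^ (n + m)
                * (m : ℝ) * (v ^ n - v ^ (m * (p + 1)))
                / ((m : ℝ) * ((p + 2 : ℕ) : ℝ) - ((m : ℝ) + (n : ℝ))) := by
    simp only [hexp]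
    rw [intervalIntegral.integral_neg, intervalIntegral.integral_finsetSum
      (fun n _ => Continuous.intervalIntegrable (by fun_prop) _ _)]
    congr 1
    refine Finset.sum_congr rfl fun n hn => ?_
    rw [intervalIntegral.integral_finsetSum
      (fun n _ => Continuous.intervalIntegrable (by fun_prop) _ _)]
    refine Finset.sum_congr rfl fun m hm => ?_
    rw [intervalIntegral.integral_const_mul, integral_pow]
    have hn' := Finset.mem_range.1 hn
    obtain ⟨q, rfl⟩ : ∃ q, m = q + 1 := ⟨m - 1, by have := (Finset.mem_Icc.1 hm).1; omega⟩
    obtain ⟨s, rfl⟩ : ∃ s, p = n + s := ⟨p - n, by omega⟩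
    have h0 : (q + 1) * (n + s + 1) = (n + s + 1) * q + (n + s + 1) := by ring
    have h1 : (q + 1) * (n + s + 1) - 1 - n = s + (n + s + 1) * q := by
      omega
    have h2 : ((q + 1 : ℕ) : ℝ) * ((n + s + 2 : ℕ) : ℝ) - (((q + 1 : ℕ) : ℝ) + (n : ℝ))
        = ((s + (n + s + 1) * q : ℕ) : ℝ) + 1 := by push_cast; ring
    rw [h1, h2, h0]
    have h3 : ((s + (n + s + 1) * q : ℕ) : ℝ) + 1 ≠ 0 := by positivity
    rw [one_pow, ← mul_div_assoc]
    congr 1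
    ring
  have hP : (((p + 2 : ℕ) : ℝ) - 1) = p + 1 := by push_cast; ring
  have hbound : ∫ z in v..1, (z - v) ^ p * ((M : ℝ) * (1 - z ^ (p + 1)) ^ (M - 1))
      ≤ ∫ z in v..1, z ^ p * ((M : ℝ) * (1 - z ^ (p + 1)) ^ (M - 1)) := by
    refine intervalIntegral.integral_mono_on hv1
      (Continuous.intervalIntegrable (by fun_prop) _ _)
      (Continuous.intervalIntegrable (by fun_prop) _ _) fun z hz => ?_
    have hz0 : 0 ≤ z := hv0.trans hz.1
    have : 0 ≤ 1 - z ^ (p + 1) := sub_nonneg.2 (pow_le_one₀ hz0 hz.2)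
    have h2 : 0 ≤ z - v := sub_nonneg.2 hz.1
    have h3 : z - v ≤ z := by linarith
    gcongr
  have hftc : ∫ z in v..1, (p + 1 : ℝ) * (z ^ p * ((M : ℝ) * (1 - z ^ (p + 1)) ^ (M - 1)))
      = (1 - v ^ (p + 1)) ^ M := by
    have := intervalIntegral.integral_eq_sub_of_hasDerivAt (a := v) (b := 1)
      (f := fun z : ℝ => - (1 - z ^ (p + 1)) ^ M)
      (f' := fun z : ℝ => (p + 1 : ℝ) * (z ^ p * ((M : ℝ) * (1 - z ^ (p + 1)) ^ (M - 1))))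
      (fun z _ => by
        have := ((((hasDerivAt_pow (p + 1) z).const_sub 1)).pow M).neg
        refine this.congr_deriv ?_
        push_cast
        simp
        ring) (Continuous.intervalIntegrable (by fun_prop) _ _)
    rw [this]
    have : M ≠ 0 := by omega
    simp [this]
  rw [intervalIntegral.integral_const_mul] at hftc
  have hle : (1 - v ^ (p + 1)) ^ M ≤ 1 :=
    pow_le_one₀ (sub_nonneg.2 (pow_le_one₀ hv0 hv1)) (by
      have : 0 ≤ v ^ (p + 1) := by positivity
      linarith)
  rw [hP]
  rw [hint] at hbound
  have hp : (0 : ℝ) ≤ p + 1 := by positivity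
  have := mul_le_mul_of_nonneg_left hbound hp
  linarith

lemma aux_prob {Ω : Type*} [MeasurableSpace Ω] (μ : Measure Ω) [IsProbabilityMeasure μ]
    (V R : Ω → ℝ) (hVmeas : Measurable V) (hRmeas : Measurable R)
    (hVrange : ∀ᵐ ω ∂μ, V ω ∈ Set.Icc (0 : ℝ) 1) (F φ : ℝ → ℝ)
    (hVcdf : ∀ v ∈ Set.Icc (0 : ℝ) 1, μ {ω | V ω ≤ v} = ENNReal.ofReal (F v))
    (hF : ∀ v ∈ Set.Icc (0 : ℝ) 1, 0 ≤ F v)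
    (hφm : Measurable φ) (hφ0 : ∀ r, 0 ≤ φ r) (hφn : ∀ r, r ≤ 0 → φ r = 0)
    (hRdens : Measure.map R μ = volume.withDensity (fun r => ENNReal.ofReal (φ r)))
    (hindep : IndepFun V R μ) (d : ℝ) (hd : 0 < d)
    (hint : IntegrableOn (fun r => φ r * (F (d / r) - 1)) (Set.Ioi d)) :
    μ {ω | R ω * V ω ≤ d}
      = ENNReal.ofReal (1 + ∫ r in Set.Ioi d, φ r * (F (d / r) - 1)) := by
  have hφl : ∫⁻ r, ENNReal.ofReal (φ r) = 1 := by
    have : Measure.map R μ Set.univ = 1 := by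
      rw [Measure.map_apply hRmeas MeasurableSet.univ]; simp
    rw [hRdens, withDensity_apply _ MeasurableSet.univ] at this
    simpa using this
  have hφi : Integrable φ := by
    refine ⟨hφm.aestronglyMeasurable, ?_⟩
    rw [hasFiniteIntegral_iff_ofReal (Filter.Eventually.of_forall hφ0), hφl]
    exact ENNReal.one_lt_top
  have hφ1 : ∫ r, φ r = 1 := by
    rw [integral_eq_lintegral_of_nonneg_ae (Filter.Eventually.of_forall hφ0)
      hφm.aestronglyMeasurable, hφl]
    simp
  set g : ℝ → ℝ := (Set.Ioi d).indicator (fun r => φ r * (F (d / r) - 1)) with hg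
  have hgi : Integrable g := hint.integrable_indicator measurableSet_Ioi
  have hmem : ∀ r, d < r → d / r ∈ Set.Icc (0 : ℝ) 1 := fun r hr => by
    have hr0 := hd.trans hr
    exact ⟨by positivity, (div_le_one hr0).2 hr.le⟩
  have h0 : ∀ r, 0 ≤ φ r + g r := fun r => by
    by_cases hr : d < r
    · have : g r = φ r * (F (d / r) - 1) := Set.indicator_of_mem (by exact hr) _
      rw [this]
      have := mul_nonneg (hφ0 r) (hF _ (hmem r hr))
      linarith
    · have : g r = 0 := Set.indicator_of_notMem (by exact hr) _
      rw [this, add_zero]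
      exact hφ0 r
  have hs : MeasurableSet {x : ℝ × ℝ | x.2 * x.1 ≤ d} :=
    measurableSet_le (by fun_prop) (by fun_prop)
  have hprod := (indepFun_iff_map_prod_eq_prod_map_map hVmeas.aemeasurable
    hRmeas.aemeasurable).1 hindep
  have hVp : IsProbabilityMeasure (Measure.map V μ) :=
    Measure.isProbabilityMeasure_map hVmeas.aemeasurable
  have hRp : IsProbabilityMeasure (Measure.map R μ) :=
    Measure.isProbabilityMeasure_map hRmeas.aemeasurable
  have e1 : μ {ω | R ω * V ω ≤ d}
      = ∫⁻ r, Measure.map V μ ((fun v => (v, r)) ⁻¹' {x : ℝ × ℝ | x.2 * x.1 ≤ d})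
          ∂(Measure.map R μ) := by
    rw [← Measure.prod_apply_symm hs, ← hprod, Measure.map_apply (by fun_prop) hs]
    rfl
  rw [e1, hRdens, lintegral_withDensity_eq_lintegral_mul _ (by fun_prop)
    (measurable_measure_prodMk_right hs)]
  have e2 : ∀ r, ((fun r => ENNReal.ofReal (φ r)) * fun r => Measure.map V μ
      ((fun v => (v, r)) ⁻¹' {x : ℝ × ℝ | x.2 * x.1 ≤ d})) r
      = ENNReal.ofReal (φ r + g r) := fun r => by
    rw [Pi.mul_apply, Measure.map_apply hVmeas (measurable_prodMk_right hs)]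
    by_cases hr0 : r ≤ 0
    · have : g r = 0 := Set.indicator_of_notMem (by
        simp only [Set.mem_Ioi, not_lt]; linarith) _
      simp [hφn r hr0, this]
    push Not at hr0
    by_cases hr : d < r
    · have : g r = φ r * (F (d / r) - 1) := Set.indicator_of_mem (by exact hr) _
      have hset : V ⁻¹' ((fun v => (v, r)) ⁻¹' {x : ℝ × ℝ | x.2 * x.1 ≤ d})
          = {ω | V ω ≤ d / r} := by
        ext ω
        simp only [Set.mem_preimage, Set.mem_ofPred_eq]
        rw [le_div_iff₀ hr0, mul_comm]
      rw [hset, hVcdf _ (hmem r hr), ← ENNReal.ofReal_mul (hφ0 r), this]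
      congr 1
      ring
    · have : g r = 0 := Set.indicator_of_notMem (by exact hr) _
      have hone : μ (V ⁻¹' ((fun v => (v, r)) ⁻¹' {x : ℝ × ℝ | x.2 * x.1 ≤ d})) = 1 := by
        rw [← measure_univ (μ := μ)]
        refine measure_congr (Filter.eventuallyEq_univ.2 ?_)
        filter_upwards [hVrange] with ω hω
        simp only [Set.mem_preimage, Set.mem_ofPred_eq]
        push Not at hr
        nlinarith [hω.1, hω.2]
      rw [hone, this, mul_one, add_zero]
  simp only [e2]
  have e3 := ofReal_integral_eq_lintegral_ofReal (hφi.add hgi) (Filter.Eventually.of_forall h0)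
  simp only [Pi.add_apply] at e3
  rw [← e3, integral_add hφi hgi, hφ1, hg, integral_indicator measurableSet_Ioi]

lemma aux_main (p M : ℕ) (hM : 1 ≤ M) (d : ℝ) (hd : 0 < d) (φ : ℝ → ℝ) (c : ℕ → ℕ → ℝ)
    (F : ℝ → ℝ)
    (hφ : ∀ r, 0 < r → φ r = r ^ (p + 1) * Real.exp (-r) / (Nat.factorial (p + 1) : ℝ))
    (hF : ∀ v, F v = 1 + ((p : ℝ) + 1) * ∑ n ∈ Finset.range (p + 1), ∑ m ∈ Finset.Icc 1 M,
      c n m * (v ^ n - v ^ (m * (p + 1)))) :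
    IntegrableOn (fun r => φ r * (F (d / r) - 1)) (Set.Ioi d) ∧
    1 + ∫ r in Set.Ioi d, φ r * (F (d / r) - 1)
      = 1 + (Real.exp (-d) / (Nat.factorial p : ℝ)) *
            (∑ n ∈ Finset.range (p + 1), ∑ m ∈ Finset.Icc 1 M, c n m
                * ∑ l ∈ Finset.range (p + 1 - n + 1),
                    (Nat.factorial l : ℝ) * ((p + 1 - n).choose l : ℝ) * d ^ (p + 1 - l))
          - (Real.exp (-d) / (Nat.factorial p : ℝ)) *
            (∑ n ∈ Finset.range (p + 1), c n 1 * d ^ (p + 1))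
          - (Real.exp (-d) / (Nat.factorial p : ℝ)) *
            (∑ n ∈ Finset.range (p + 1), ∑ m ∈ Finset.Icc 2 M, c n m
                * ∑ l ∈ Finset.Icc 1 ((m - 1) * (p + 1) - 1),
                    (-1 : ℝ) ^ (l - 1) * d ^ (p + 1 + l)
                      / ((Nat.factorial l : ℝ) * (((m - 1) * (p + 1) - 1).choose l : ℝ)))
          - (expIntE1 d / (Nat.factorial p : ℝ)) *
            (∑ n ∈ Finset.range (p + 1), ∑ m ∈ Finset.Icc 2 M, c n m
                * ((-1 : ℝ) ^ ((m - 1) * (p + 1) - 1) * d ^ (m * (p + 1))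
                      / (Nat.factorial ((m - 1) * (p + 1) - 1) : ℝ))) := by
  set t : ℕ → ℕ → ℝ → ℝ := fun n m r => (c n m / (Nat.factorial p : ℝ)) *
    (d ^ n * (r ^ (p + 1 - n) * Real.exp (-r))
      - d ^ (m * (p + 1)) * (Real.exp (-r) / r ^ ((m - 1) * (p + 1)))) with ht
  have hti : ∀ n m, IntegrableOn (t n m) (Set.Ioi d) := fun n m =>
    (((aux_intG d hd _).const_mul _).sub ((aux_intJ d hd _).const_mul _)).const_mul _
  have hpt : Set.EqOn (fun r => ∑ n ∈ Finset.range (p + 1), ∑ m ∈ Finset.Icc 1 M, t n m r)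
      (fun r => φ r * (F (d / r) - 1)) (Set.Ioi d) := by
    intro r hr
    have hr0 : 0 < r := hd.trans hr
    have hr1 : r ≠ 0 := hr0.ne'
    simp only [hφ r hr0, hF, add_sub_cancel_left, Finset.mul_sum]
    refine Finset.sum_congr rfl fun n hn => Finset.sum_congr rfl fun m hm => ?_
    have hn' := Finset.mem_range.1 hn
    obtain ⟨q, rfl⟩ : ∃ q, m = q + 1 := ⟨m - 1, by have := (Finset.mem_Icc.1 hm).1; omega⟩
    obtain ⟨s, hs⟩ : ∃ s, p + 1 = n + s := ⟨p + 1 - n, by omega⟩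
    have hf2 : (((p + 1).factorial : ℕ) : ℝ) = (p + 1) * p.factorial := by
      rw [Nat.factorial_succ]; push_cast; ring
    have hk : ((p : ℝ) + 1) ≠ 0 := by positivity
    have hf : ((p.factorial : ℕ) : ℝ) ≠ 0 := by positivity
    have a1 : r ^ (p + 1) * (d / r) ^ n = d ^ n * r ^ (p + 1 - n) := by
      rw [hs, Nat.add_sub_cancel_left, div_pow, pow_add]
      field_simp
    have a2 : r ^ (p + 1) * (d / r) ^ ((q + 1) * (p + 1))
        = d ^ ((q + 1) * (p + 1)) / r ^ (q * (p + 1)) := by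
      rw [div_pow, add_mul q 1 (p + 1), one_mul, pow_add r (q * (p + 1))]
      field_simp
    simp only [ht, hf2, Nat.add_sub_cancel]
    calc _ = c n (q + 1) / p.factorial * Real.exp (-r) * (d ^ n * r ^ (p + 1 - n)
          - d ^ ((q + 1) * (p + 1)) / r ^ (q * (p + 1))) := by ring
      _ = _ := by
        rw [← a1, ← a2]
        field_simp
  refine ⟨IntegrableOn.congr_fun (integrable_finsetSum _ fun n _ =>
    integrable_finsetSum _ fun m _ => hti n m) hpt measurableSet_Ioi, ?_⟩
  rw [← setIntegral_congr_fun measurableSet_Ioi hpt, integral_finsetSum _ (fun n _ =>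
    integrable_finsetSum _ fun m _ => hti n m)]
  have hmid : ∀ n, ∫ r in Set.Ioi d, ∑ m ∈ Finset.Icc 1 M, t n m r
      = ∑ m ∈ Finset.Icc 1 M, ∫ r in Set.Ioi d, t n m r := fun n =>
    integral_finsetSum _ fun m _ => hti n m
  simp only [hmid]
  have hval : ∀ n m, ∫ r in Set.Ioi d, t n m r = (c n m / (Nat.factorial p : ℝ)) *
    (d ^ n * (∫ r in Set.Ioi d, r ^ (p + 1 - n) * Real.exp (-r))
      - d ^ (m * (p + 1)) * ∫ r in Set.Ioi d, Real.exp (-r) / r ^ ((m - 1) * (p + 1))) := by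
    intro n m
    simp only [ht]
    rw [integral_const_mul, integral_sub ((aux_intG d hd _).const_mul _)
      ((aux_intJ d hd _).const_mul _), integral_const_mul, integral_const_mul]
  have hG : ∀ n ∈ Finset.range (p + 1),
      d ^ n * (∫ r in Set.Ioi d, r ^ (p + 1 - n) * Real.exp (-r))
      = Real.exp (-d) * ∑ l ∈ Finset.range (p + 1 - n + 1),
          (Nat.factorial l : ℝ) * ((p + 1 - n).choose l : ℝ) * d ^ (p + 1 - l) := by
    intro n hn
    have hn' := Finset.mem_range.1 hn
    rw [aux_G d hd, mul_left_comm, Finset.mul_sum]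
    congr 1
    refine Finset.sum_congr rfl fun l hl => ?_
    have hl' := Finset.mem_range.1 hl
    have : p + 1 - l = n + (p + 1 - n - l) := by omega
    rw [this, pow_add]
    ring
  have hJ1 : d ^ (1 * (p + 1)) * ∫ r in Set.Ioi d, Real.exp (-r) / r ^ ((1 - 1) * (p + 1))
      = Real.exp (-d) * d ^ (p + 1) := by
    have := aux_expint d
    simp only [pow_zero, one_mul] at this
    simp only [Nat.sub_self, zero_mul, pow_zero, div_one, one_mul, this]
    ring
  have hJ : ∀ m ∈ Finset.Icc 2 M,
      d ^ (m * (p + 1)) * (∫ r in Set.Ioi d, Real.exp (-r) / r ^ ((m - 1) * (p + 1)))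
      = Real.exp (-d) * (∑ l ∈ Finset.Icc 1 ((m - 1) * (p + 1) - 1),
                    (-1 : ℝ) ^ (l - 1) * d ^ (p + 1 + l)
                      / ((Nat.factorial l : ℝ) * (((m - 1) * (p + 1) - 1).choose l : ℝ)))
        + expIntE1 d * ((-1 : ℝ) ^ ((m - 1) * (p + 1) - 1) * d ^ (m * (p + 1))
                      / (Nat.factorial ((m - 1) * (p + 1) - 1) : ℝ)) := by
    intro m hm
    obtain ⟨q, rfl⟩ : ∃ q, m = q + 2 := ⟨m - 2, by have := (Finset.mem_Icc.1 hm).1; omega⟩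
    obtain ⟨k, hk⟩ : ∃ k, (q + 2 - 1) * (p + 1) = k + 1 :=
      ⟨(q + 2 - 1) * (p + 1) - 1, by
        have : 0 < (q + 2 - 1) * (p + 1) := Nat.mul_pos (by omega) (by omega)
        omega⟩
    have hk2 : (q + 2) * (p + 1) = (p + 1) + (k + 1) := by
      rw [← hk, show q + 2 - 1 = q + 1 from rfl]; ring
    rw [hk, hk2, Nat.add_sub_cancel, pow_add d (p + 1) (k + 1), mul_assoc, aux_J d hd k, mul_add,
      mul_left_comm, Finset.mul_sum]
    congr 1
    · congr 1
      refine Finset.sum_congr rfl fun l hl => ?_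
      rw [pow_add]
      ring
    · ring
  simp only [hval]
  have hsplit : ∀ f : ℕ → ℝ, ∑ m ∈ Finset.Icc 1 M, f m = f 1 + ∑ m ∈ Finset.Icc 2 M, f m :=
    fun f => (Finset.add_sum_Ioc_eq_sum_Icc (f := f) hM).symm
  have key : ∀ n ∈ Finset.range (p + 1), ∑ m ∈ Finset.Icc 1 M, (c n m / (Nat.factorial p : ℝ)) *
    (d ^ n * (∫ r in Set.Ioi d, r ^ (p + 1 - n) * Real.exp (-r))
      - d ^ (m * (p + 1)) * ∫ r in Set.Ioi d, Real.exp (-r) / r ^ ((m - 1) * (p + 1)))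
      = (Real.exp (-d) / (Nat.factorial p : ℝ)) * (∑ m ∈ Finset.Icc 1 M, c n m
                * ∑ l ∈ Finset.range (p + 1 - n + 1),
                    (Nat.factorial l : ℝ) * ((p + 1 - n).choose l : ℝ) * d ^ (p + 1 - l))
        - (Real.exp (-d) / (Nat.factorial p : ℝ)) * (c n 1 * d ^ (p + 1))
        - (Real.exp (-d) / (Nat.factorial p : ℝ)) * (∑ m ∈ Finset.Icc 2 M, c n m
                * ∑ l ∈ Finset.Icc 1 ((m - 1) * (p + 1) - 1),
                    (-1 : ℝ) ^ (l - 1) * d ^ (p + 1 + l)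
                      / ((Nat.factorial l : ℝ) * (((m - 1) * (p + 1) - 1).choose l : ℝ)))
        - (expIntE1 d / (Nat.factorial p : ℝ)) * (∑ m ∈ Finset.Icc 2 M, c n m
                * ((-1 : ℝ) ^ ((m - 1) * (p + 1) - 1) * d ^ (m * (p + 1))
                      / (Nat.factorial ((m - 1) * (p + 1) - 1) : ℝ))) := by
    intro n hn
    simp only [mul_sub, Finset.sum_sub_distrib, hG n hn]
    rw [hsplit (fun m => c n m / (Nat.factorial p : ℝ) * (d ^ (m * (p + 1)) *
      ∫ r in Set.Ioi d, Real.exp (-r) / r ^ ((m - 1) * (p + 1)))), hJ1,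
      Finset.sum_congr (s₁ := Finset.Icc 2 M) rfl (fun m hm => by rw [hJ m hm])]
    have : ∀ a b x y e : ℝ, a = b → x = y + e → a - (c n 1 / (Nat.factorial p : ℝ) *
        (Real.exp (-d) * d ^ (p + 1)) + x) = b - (Real.exp (-d) / (Nat.factorial p : ℝ)) *
          (c n 1 * d ^ (p + 1)) - y - e := by
      intro a b x y e h1 h2
      rw [h1, h2]
      ring
    apply this
    · rw [Finset.mul_sum _ _ (Real.exp (-d) / (Nat.factorial p : ℝ))]
      refine Finset.sum_congr rfl fun m _ => ?_
      ring
    · rw [Finset.mul_sum, Finset.mul_sum, ← Finset.sum_add_distrib]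
      refine Finset.sum_congr rfl fun m _ => ?_
      ring
  rw [Finset.sum_congr rfl key]
  simp only [Finset.sum_sub_distrib, ← Finset.mul_sum]
  ring

/-- Theorem 2 of the paper: the CDF of `D = R·V`, where `V` has the Theorem-3 CDF and `R` is
an independent chi-square variable with density `r^(N−1) e^{−r}/(N−1)!` on `(0,∞)`. -/
theorem stmt11 {Ω : Type*} [MeasurableSpace Ω] (μ : Measure Ω) [IsProbabilityMeasure μ]
    (N B : ℕ) (hN : 3 ≤ N) (hB : 1 ≤ B) (V R : Ω → ℝ)
    (hVmeas : Measurable V) (hRmeas : Measurable R)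
    (hVrange : ∀ᵐ ω ∂μ, V ω ∈ Set.Icc (0 : ℝ) 1)
    (hVcdf : ∀ v ∈ Set.Icc (0 : ℝ) 1,
      μ {ω | V ω ≤ v}
        = ENNReal.ofReal (1 + ((N : ℝ) - 1) *
            ∑ n ∈ Finset.range (N - 1), ∑ m ∈ Finset.Icc 1 (2 ^ B),
              ((N - 2).choose n : ℝ) * ((2 ^ B).choose m : ℝ) * (-1 : ℝ) ^ (n + m)
                * (m : ℝ) * (v ^ n - v ^ (m * (N - 1)))
                / ((m : ℝ) * (N : ℝ) - ((m : ℝ) + (n : ℝ)))))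
    (hRdens : Measure.map R μ = volume.withDensity (fun r =>
      ENNReal.ofReal (if 0 < r then r ^ (N - 1) * Real.exp (-r) / (Nat.factorial (N - 1) : ℝ)
        else 0)))
    (hindep : IndepFun V R μ) :
    ∀ d : ℝ, 0 < d →
      μ {ω | R ω * V ω ≤ d}
        = ENNReal.ofReal (1
          + (Real.exp (-d) / (Nat.factorial (N - 2) : ℝ)) *
            (∑ n ∈ Finset.range (N - 1), ∑ m ∈ Finset.Icc 1 (2 ^ B),
              ((N - 2).choose n : ℝ) * ((2 ^ B).choose m : ℝ)
                * ((-1 : ℝ) ^ (n + m) * (m : ℝ)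
                    / ((m : ℝ) * (N : ℝ) - ((m : ℝ) + (n : ℝ))))
                * ∑ l ∈ Finset.range (N - 1 - n + 1),
                    (Nat.factorial l : ℝ) * ((N - 1 - n).choose l : ℝ) * d ^ (N - 1 - l))
          - (Real.exp (-d) / (Nat.factorial (N - 2) : ℝ)) *
            (∑ n ∈ Finset.range (N - 1),
              ((N - 2).choose n : ℝ) * (2 ^ B : ℝ)
                * ((-1 : ℝ) ^ (n + 1) / ((N : ℝ) - 1 - (n : ℝ))) * d ^ (N - 1))
          - (Real.exp (-d) / (Nat.factorial (N - 2) : ℝ)) *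
            (∑ n ∈ Finset.range (N - 1), ∑ m ∈ Finset.Icc 2 (2 ^ B),
              ((N - 2).choose n : ℝ) * ((2 ^ B).choose m : ℝ)
                * ((-1 : ℝ) ^ (n + m) * (m : ℝ)
                    / ((m : ℝ) * (N : ℝ) - ((m : ℝ) + (n : ℝ))))
                * ∑ l ∈ Finset.Icc 1 ((m - 1) * (N - 1) - 1),
                    (-1 : ℝ) ^ (l - 1) * d ^ (N - 1 + l)
                      / ((Nat.factorial l : ℝ) * (((m - 1) * (N - 1) - 1).choose l : ℝ)))
          - (expIntE1 d / (Nat.factorial (N - 2) : ℝ)) *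
            (∑ n ∈ Finset.range (N - 1), ∑ m ∈ Finset.Icc 2 (2 ^ B),
              ((N - 2).choose n : ℝ) * ((2 ^ B).choose m : ℝ)
                * ((-1 : ℝ) ^ (n + m) * (m : ℝ)
                    / ((m : ℝ) * (N : ℝ) - ((m : ℝ) + (n : ℝ))))
                * ((-1 : ℝ) ^ ((m - 1) * (N - 1) - 1) * d ^ (m * (N - 1))
                      / (Nat.factorial ((m - 1) * (N - 1) - 1) : ℝ)))) := by
  intro d hd
  obtain ⟨p, rfl⟩ : ∃ p, N = p + 2 := ⟨N - 2, by omega⟩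
  have hM : 1 ≤ 2 ^ B := Nat.one_le_two_pow
  simp only [show p + 2 - 1 = p + 1 from rfl, show p + 2 - 2 = p from rfl] at *
  have hmain := aux_main p (2 ^ B) hM d hd
    (fun r => if 0 < r then r ^ (p + 1) * Real.exp (-r) / (Nat.factorial (p + 1) : ℝ) else 0)
    (fun n m => (p.choose n : ℝ) * ((2 ^ B).choose m : ℝ) * ((-1 : ℝ) ^ (n + m) * (m : ℝ)
                    / ((m : ℝ) * ((p + 2 : ℕ) : ℝ) - ((m : ℝ) + (n : ℝ)))))
    (fun v => 1 + (((p + 2 : ℕ) : ℝ) - 1) *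
            ∑ n ∈ Finset.range (p + 1), ∑ m ∈ Finset.Icc 1 (2 ^ B),
              (p.choose n : ℝ) * ((2 ^ B).choose m : ℝ) * (-1 : ℝ) ^ (n + m)
                * (m : ℝ) * (v ^ n - v ^ (m * (p + 1)))
                / ((m : ℝ) * ((p + 2 : ℕ) : ℝ) - ((m : ℝ) + (n : ℝ))))
    (fun r hr => if_pos hr) (fun v => by
      have hP : (((p + 2 : ℕ) : ℝ) - 1) = p + 1 := by push_cast; ring
      simp only [hP]
      congr 2
      refine Finset.sum_congr rfl fun n _ => Finset.sum_congr rfl fun m _ => ?_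
      ring)
  rw [aux_prob μ V R hVmeas hRmeas hVrange _ _ hVcdf
    (fun v hv => aux_Fnonneg p (2 ^ B) hM v hv.1 hv.2)
    (Measurable.ite measurableSet_Ioi (by fun_prop) (by fun_prop))
    (fun r => by
      split_ifs with h
      · positivity
      · exact le_rfl)
    (fun r hr => if_neg (not_lt.2 hr)) hRdens hindep d hd hmain.1, hmain.2]
  congr 5
  refine Finset.sum_congr rfl fun n _ => ?_
  simp only [Nat.choose_one_right]
  push_cast
  congr 3
  · ring
  · ring
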